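/- Fix an integer N ≥ 1, distinct points k₁, …, k_N ∈ ℂ with Re k_j · Im k_j > 0, positive integers n₁, …, n_N, and parameters r_{j,m} ∈ ℂ for 1 ≤ j ≤ N, 1 ≤ m ≤ n_j. For each j and l ≥ 0 define f_{j,l}(x,t) := (1/l!) ∂_k^l [ e^{−2 i k² (x + 2 k² t)} ] |_{k = k_j} (with f_{j,m} := 0 for m < 0), and write f_{j,m}* for its complex conjugate. Define η_{j,l} = Σ_{m=l}^{n_j} r_{j,m} f_{j,m−l} and η̃_{j,l} = Σ_{m=l}^{n_j} (−1)^{l+1} r_{j,m} f_{j,m−l}, and let the column vector |η⟩ be the concatenation over j = 1,…,N of the blocks (η_{j,1},…,η_{j,n_j}, −η̃_{j,1},…,−η̃_{j,n_j}). Let Ω be the square matrix of total size 2(n₁+…+n_N) with blocks [ω_{jl}] of size 2n_j × 2n_l, where [ω_{jl}] = [[w¹_{jl}, w²_{jl}],[w³_{jl}, w⁴_{jl}]] with entries (1 ≤ p ≤ n_j, 1 ≤ q ≤ n_l): w¹_{jl}[p,q] = −Σ_{m=p}^{n_j} Σ_{s=0}^{m−p} C(q+s−1, s) (−1)^s r_{j,m}*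 f_{j,m−p−s}* / (k_j* − k_l)^{s+q}, w²_{jl}[p,q] = −Σ_{m=p}^{n_j} Σ_{s=0}^{m−p} C(q+s−1, s) (−1)^s r_{j,m}* f_{j,m−p−s}* / (k_j* + k_l)^{s+q}, w³_{jl}[p,q] = Σ_{m=p}^{n_j} Σ_{s=0}^{m−p} C(q+s−1, s) (−1)^{p+s+1} r_{j,m}* f_{j,m−p−s}* / (k_j* − k_l)^{s+q}, w⁴_{jl}[p,q] = Σ_{m=p}^{n_j} Σ_{s=0}^{m−p} C(q+s−1, s) (−1)^{p+s+1} r_{j,m}* f_{j,m−p−s}* / (k_j* + k_l)^{s+q}. Let ⟨Y₀| be the row vector that is the concatenation over j of two copies of (1,0,…,0) ∈ ℂ^{1×n_j}, and let I_σ be the block diagonal matrix diag(I_{n₁}, −I_{n₁}, …, I_{n_N}, −I_{n_N}). Assume det(I_σ + Ω*Ω)(x,t) ≠ 0 for all (x,t) ∈ ℝ². Then q(x,t) = 2i [ det( I_σ + Ω*Ω + |η⟩⟨Y₀| ) / det( I_σ + Ω*Ω ) − 1 ] satisfies the Gerdjikov–Ivanov equation i q_t + q_{xx} − i q² (q_x)*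 + (1/2) q³ (q*)² = 0 on ℝ². (This is the multiple-pole soliton with N distinct high-order poles and zero boundary conditions.) -/

import Mathlib

/-!
The solution is a Cauchy-matrix (dressing) solution, and the equation is checked by algebra in a
vector space with one coordinate for each pole and each order.

The two copies attached to a pole are redundant. With `D = diag((-1)^p)`, the matrix
`A = I_σ + Ω*Ω` sends `(v, -D v)` to `(M v, D M v)`, where `M = 1 + S̄₂ S₁` and `S₁`, `S₂` are signed sums
of the blocks of `Ω` (`Amat_mulVec`). As `|η⟩ = (e, D e)`, the matrix determinant
lemma collapses the quotient to `q = 4i⟨y, u⟩` with `u = M⁻¹ e` (`qSol_eq`).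

Let `K` be the matrix of Jordan blocks of the poles and `H = K²`. Multiplication by the spectral
parameter acts on Taylor coefficients at `k_j` as a Jordan block, so `e_x = -2iHe`,
`e_t = -4iH²e`, `S_x = 2iH̄S`, `S_t = 4iH̄²S` for `S = S₁, S₂`. Since `Σ_s C(q+s-1,s)(-ε)^s/d^{s+q}`
is the expansion of `(d + ε)^{-q}`, the Sylvester relations `K̄S₁ = S₂K + 2ē yᵀ`, `K̄S₂ = S₁K` hold
(`sylvester`).

The rest is formal and carried out in `DressingData`. With `ψ = M⁻¹ S̄₂ K̄ ē` and
`β = ⟨y, K̄²ē - K̄S₁ψ⟩`, differentiating `M u = e` and `M ψ = S̄₂K̄ē` gives `u_x = -2iHu - qψ`,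
`ψ_x = -4iβu` and a formula for `u_t` (`u_x`, `ψ_x`, `u_t`). Contracted with `y` they yield
`i q_t + q_xx = 8iβ q²`. A Miura-type identity (`miura`) says `8iβ = i q̄_x - ½ q q̄²`, and
substituting it gives the Gerdjikov–Ivanov equation.
-/

open Matrix Complex ComplexConjugate Finset

noncomputable section

/-- The Taylor coefficients f_{j,l}(x,t) = (1/l!) ∂_k^l e^{−2ik²(x+2k²t)} |_{k=k_j}. -/
def flZBC (kj : ℂ) (l : ℕ) (x t : ℝ) : ℂ :=
  (1 / (Nat.factorial l) : ℂ) *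
    iteratedDeriv l
      (fun k : ℂ => Complex.exp (-2 * Complex.I * k ^ 2 * ((x : ℂ) + 2 * k ^ 2 * (t : ℂ))))
      kj

/-- η_{j,l} = Σ_{m=l}^{n_j} r_{j,m} f_{j,m−l}. -/
def etaMP (nj : ℕ) (kj : ℂ) (rj : ℕ → ℂ) (l : ℕ) (x t : ℝ) : ℂ :=
  ∑ m ∈ Finset.Icc l nj, rj m * flZBC kj (m - l) x t

/-- η̃_{j,l} = Σ_{m=l}^{n_j} (−1)^{l+1} r_{j,m} f_{j,m−l}. -/
def etaTildeMP (nj : ℕ) (kj : ℂ) (rj : ℕ → ℂ) (l : ℕ) (x t : ℝ) : ℂ :=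
  ∑ m ∈ Finset.Icc l nj, (-1 : ℂ) ^ (l + 1) * rj m * flZBC kj (m - l) x t

/-- The common double sum
Σ_{m=p}^{n_j} Σ_{s=0}^{m−p} C(q+s−1,s)(−1)^s r_{j,m}* f_{j,m−p−s}* / d^{s+q}. -/
def wSumMP (nj : ℕ) (kj : ℂ) (rj : ℕ → ℂ) (d : ℂ) (p q : ℕ) (x t : ℝ) : ℂ :=
  ∑ m ∈ Finset.Icc p nj, ∑ s ∈ Finset.range (m - p + 1),
    (Nat.choose (q + s - 1) s : ℂ) * (-1 : ℂ) ^ s * conj (rj m) * conj (flZBC kj (m - p - s) x t)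
      / d ^ (s + q)

/-- The index set: for each pole j, two copies of {1,…,n_j}. -/
abbrev IdxMP (N : ℕ) (n : Fin N → ℕ) : Type := (j : Fin N) × (Fin (n j) ⊕ Fin (n j))

/-- The matrix Ω with blocks [ω_{jl}] = [[w¹,w²],[w³,w⁴]]. -/
def OmegaMP (N : ℕ) (n : Fin N → ℕ) (k : Fin N → ℂ) (r : Fin N → ℕ → ℂ) (x t : ℝ) :
    Matrix (IdxMP N n) (IdxMP N n) ℂ :=
  Matrix.of fun i i' =>
    match i, i' with
    | ⟨j, Sum.inl p⟩, ⟨l, Sum.inl q⟩ =>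
        -wSumMP (n j) (k j) (r j) (conj (k j) - k l) (p.1 + 1) (q.1 + 1) x t
    | ⟨j, Sum.inl p⟩, ⟨l, Sum.inr q⟩ =>
        -wSumMP (n j) (k j) (r j) (conj (k j) + k l) (p.1 + 1) (q.1 + 1) x t
    | ⟨j, Sum.inr p⟩, ⟨l, Sum.inl q⟩ =>
        (-1 : ℂ) ^ (p.1 + 2) * wSumMP (n j) (k j) (r j) (conj (k j) - k l) (p.1 + 1) (q.1 + 1) x t
    | ⟨j, Sum.inr p⟩, ⟨l, Sum.inr q⟩ =>
        (-1 : ℂ) ^ (p.1 + 2) * wSumMP (n j) (k j) (r j) (conj (k j) + k l) (p.1 + 1) (q.1 + 1) x t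

/-- The block diagonal matrix I_σ = diag(I_{n₁}, −I_{n₁}, …, I_{n_N}, −I_{n_N}). -/
def IsigmaMP (N : ℕ) (n : Fin N → ℕ) : Matrix (IdxMP N n) (IdxMP N n) ℂ :=
  Matrix.of fun i i' =>
    if i = i' then Sum.elim (fun _ => (1 : ℂ)) (fun _ => (-1 : ℂ)) i.2 else 0

/-- The column vector |η⟩ concatenating the blocks (η_{j,·}, −η̃_{j,·}). -/
def BvecMP (N : ℕ) (n : Fin N → ℕ) (k : Fin N → ℂ) (r : Fin N → ℕ → ℂ) (x t : ℝ) :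
    IdxMP N n → ℂ :=
  fun i =>
    match i with
    | ⟨j, Sum.inl p⟩ => etaMP (n j) (k j) (r j) (p.1 + 1) x t
    | ⟨j, Sum.inr p⟩ => -etaTildeMP (n j) (k j) (r j) (p.1 + 1) x t

/-- The row vector ⟨Y₀| concatenating two copies of (1,0,…,0) for each pole. -/
def YvecMP (N : ℕ) (n : Fin N → ℕ) : IdxMP N n → ℂ :=
  fun i =>
    Sum.elim (fun p => if p.1 = 0 then (1 : ℂ) else 0)
      (fun p => if p.1 = 0 then (1 : ℂ) else 0) i.2

/-- A = I_σ + Ω*Ω, with Ω* the entrywise conjugate of Ω. -/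
def AmatMP (N : ℕ) (n : Fin N → ℕ) (k : Fin N → ℂ) (r : Fin N → ℕ → ℂ) (x t : ℝ) :
    Matrix (IdxMP N n) (IdxMP N n) ℂ :=
  IsigmaMP N n + (OmegaMP N n k r x t).map (starRingEnd ℂ) * OmegaMP N n k r x t

/-- The multiple high-order pole solution
q(x,t) = 2i[det(I_σ + Ω*Ω + |η⟩⟨Y₀|)/det(I_σ + Ω*Ω) − 1]. -/
def qSolMP (N : ℕ) (n : Fin N → ℕ) (k : Fin N → ℂ) (r : Fin N → ℕ → ℂ) (x t : ℝ) : ℂ :=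
  2 * Complex.I *
    ((AmatMP N n k r x t + Matrix.vecMulVec (BvecMP N n k r x t) (YvecMP N n)).det
      / (AmatMP N n k r x t).det - 1)

/-! ### The dressing algebra -/

/-- The linear-algebra content of the dressing at a fixed point `(x, t)`. In the application a bar is
complex conjugation: `Kb = K̄`, `eb = ē`, `T1 = S̄₁`, `T2 = S̄₂`, `ub = ū`, `ψb = ψ̄`; abstractly the
two halves are independent and exchanged by `swap`. `K` is the Jordan matrix of the poles, `Y` the
functional `⟨y, ·⟩`, and `rel1`, …, `relb2` are the Sylvester relations. With `M = 1 + S̄₂ S₁`,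
injective by `inj`, the vectors are `u = M⁻¹ e` and `ψ = M⁻¹ S̄₂ K̄ ē`. -/
structure DressingData (V : Type*) [AddCommGroup V] [Module ℂ V] where
  K : V →ₗ[ℂ] V
  Kb : V →ₗ[ℂ] V
  S1 : V →ₗ[ℂ] V
  S2 : V →ₗ[ℂ] V
  T1 : V →ₗ[ℂ] V
  T2 : V →ₗ[ℂ] V
  Y : V →ₗ[ℂ] ℂ
  e : V
  eb : V
  u : V
  ψ : V
  ub : V
  ψb : V
  rel1 : ∀ w, Kb (S1 w) = S2 (K w) + (2 * Y w) • eb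
  rel2 : ∀ w, Kb (S2 w) = S1 (K w)
  relb1 : ∀ w, K (T1 w) = T2 (Kb w) + (2 * Y w) • e
  relb2 : ∀ w, K (T2 w) = T1 (Kb w)
  inj : ∀ w, w + T2 (S1 w) = 0 → w = 0
  injb : ∀ w, w + S2 (T1 w) = 0 → w = 0
  hu : u + T2 (S1 u) = e
  hψ : ψ + T2 (S1 ψ) = T2 (Kb eb)
  hub : ub + S2 (T1 ub) = eb
  hψb : ψb + S2 (T1 ψb) = S2 (K e)

namespace DressingData

variable {V : Type*} [AddCommGroup V] [Module ℂ V] (D : DressingData V)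

/-- Interchange of the barred and the unbarred half. -/
def swap : DressingData V where
  K := D.Kb
  Kb := D.K
  S1 := D.T1
  S2 := D.T2
  T1 := D.S1
  T2 := D.S2
  Y := D.Y
  e := D.eb
  eb := D.e
  u := D.ub
  ψ := D.ψb
  ub := D.u
  ψb := D.ψ
  rel1 := D.relb1
  rel2 := D.relb2
  relb1 := D.rel1
  relb2 := D.rel2
  inj := D.injb
  injb := D.inj
  hu := D.hub
  hψ := D.hψb
  hub := D.hu
  hψb := D.hψ

/-- The operator `M = 1 + S̄₂ S₁`. -/
def M : V →ₗ[ℂ] V := LinearMap.id + D.T2 ∘ₗ D.S1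

theorem M_apply (w : V) : D.M w = w + D.T2 (D.S1 w) := rfl

theorem M_inj {v w : V} (h : D.M v = D.M w) : v = w := by
  rw [← sub_eq_zero]
  apply D.inj
  rw [← M_apply, map_sub, h, sub_self]

theorem Mu : D.M D.u = D.e := D.hu
theorem Mψ : D.M D.ψ = D.T2 (D.Kb D.eb) := D.hψ

/-- Moving `H = K²` through `S₁` costs one rank-one term. -/
theorem sylS (w : V) :
    D.S1 (D.K (D.K w)) = D.Kb (D.Kb (D.S1 w)) - (2 * D.Y w) • D.Kb D.eb := by
  rw [D.rel1, map_add, D.rel2, map_smul]; abel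

/-- Moving `H̄ = K̄²` through `S̄₂` costs one rank-one term. -/
theorem sylT (w : V) :
    D.T2 (D.Kb (D.Kb w)) = D.K (D.K (D.T2 w)) - (2 * D.Y (D.Kb w)) • D.e := by
  rw [D.relb2, D.relb1]; abel

/-- The scalar `a = ⟨y, K̄ S₁ u⟩`; it drops out of all evolution equations. -/
def a : ℂ := D.Y (D.Kb (D.S1 D.u))

/-- The scalar `β = ⟨y, K̄² ē - K̄ S₁ ψ⟩`, which drives `ψ_x = -4iβ u`. -/
def β : ℂ := D.Y (D.Kb (D.Kb D.eb)) - D.Y (D.Kb (D.S1 D.ψ))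

theorem a_def : D.a = D.Y (D.Kb (D.S1 D.u)) := rfl

/-- `M⁻¹ H M = H + 2u ⟨y, K̄ S₁ ·⟩ + 2ψ ⟨y, ·⟩` for `H = K²`: conjugation by `M`
changes `H` by rank two. -/
theorem M_conj (w : V) :
    D.M (D.K (D.K w) + (2 * D.Y (D.Kb (D.S1 w))) • D.u + (2 * D.Y w) • D.ψ)
      = D.K (D.K (D.M w)) := by
  rw [map_add, map_add, map_smul, map_smul, Mu, Mψ, M_apply, M_apply, sylS, map_sub, map_smul,
    sylT, map_add, map_add]
  module

theorem M_He :
    D.M (D.K (D.K D.u) + (2 * D.a) • D.u + (2 * D.Y D.u) • D.ψ) = D.K (D.K D.e) := by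
  rw [a, M_conj, Mu]

/-- Applied to `u_x = -2iHu - 4i⟨y,u⟩ψ`, `M` gives `e_x - M_x u`, where `H = K²`, `e_x = -2iHe`,
`(S̄₂)_x = -2iH S̄₂` and `(S₁)_x = 2iH̄ S₁`. -/
theorem u_x :
    D.M ((-2 * I) • D.K (D.K D.u) - (4 * I * D.Y D.u) • D.ψ)
      = (-2 * I) • D.K (D.K D.e)
        - ((-2 * I) • D.K (D.K (D.T2 (D.S1 D.u)))
          + (2 * I) • D.T2 (D.Kb (D.Kb (D.S1 D.u)))) := by
  rw [← M_He, sylT, ← a, ← Mu]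
  simp only [map_add, map_sub, map_smul]
  module

/-- The identity `M ψ_x = (S̄₂ K̄ ē)_x - M_x ψ` for `ψ_x = -4iβ u`, with the same flow of `S₁`, `S̄₂`,
`ē` as in `u_x`. -/
theorem ψ_x :
    D.M ((-4 * I * D.β) • D.u)
      = ((-2 * I) • D.K (D.K (D.T2 (D.Kb D.eb)))
          + (2 * I) • D.T2 (D.Kb (D.Kb (D.Kb D.eb))))
        - ((-2 * I) • D.K (D.K (D.T2 (D.S1 D.ψ)))
          + (2 * I) • D.T2 (D.Kb (D.Kb (D.S1 D.ψ)))) := by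
  rw [sylT, sylT, map_smul, Mu, β]
  module

/-- The identity `M u_t = e_t - M_t u` for the flow `e_t = -4iH²e`, `(S̄₂)_t = -4iH² S̄₂`,
`(S₁)_t = 4iH̄² S₁`, where `H = K²`. -/
theorem u_t :
    D.M ((-4 * I) • D.K (D.K (D.K (D.K D.u))) - (8 * I * D.Y D.u) • D.K (D.K D.ψ)
        - (8 * I * (D.Y (D.K (D.K D.u)) + 2 * D.Y D.ψ * D.Y D.u)) • D.ψ
        + (16 * I * D.Y D.u * D.β) • D.u)
      = (-4 * I) • D.K (D.K (D.K (D.K D.e)))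
        - ((-4 * I) • D.K (D.K (D.K (D.K (D.T2 (D.S1 D.u)))))
          + (4 * I) • D.T2 (D.Kb (D.Kb (D.Kb (D.Kb (D.S1 D.u)))))) := by
  have h1 := D.M_He
  have h2 := D.M_conj (D.K (D.K D.u) + (2 * D.a) • D.u + (2 * D.Y D.u) • D.ψ)
  rw [h1] at h2
  have h3 := congrArg (fun w => D.Y (D.Kb w)) (D.sylS D.u)
  rw [← h2, sylT, sylT, ← a]
  simp only [map_add, map_sub, map_smul, smul_eq_mul] at h1 h2 h3 ⊢
  rw [h3, ← h1]
  simp only [← a_def, β, Mu]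
  module

/-- The Miura-type identity that expresses `β` by `u`, `ψ` and their conjugates. It turns the cubic
term of the coupled `(q, β)` system into the two nonlinear terms of the Gerdjikov–Ivanov
equation. -/
theorem miura :
    D.β = D.Y (D.Kb (D.Kb D.ub)) + 2 * D.Y D.ub * D.Y D.ψb + 4 * D.Y D.u * D.Y D.ub ^ 2 := by
  -- `S̄₂(K̄ū + 2(yū)S₁u) = ψ`
  have h1 : D.T2 (D.Kb D.ub + (2 * D.Y D.ub) • D.S1 D.u) = D.ψ := by
    apply D.M_inj
    rw [Mψ, M_apply, ← D.hub]
    simp only [map_add, map_smul]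
    have h := D.relb1 D.ub
    have h' := congrArg (fun w => D.T2 (D.S1 w)) h
    have h'' := congrArg (fun w => D.T2 (D.S1 w)) D.hu
    simp only [map_add, map_smul] at h' h''
    rw [D.rel2, h', ← h'']
    module
  have h2 : D.Y (D.K (D.T1 D.ub)) = D.Y D.ψ + 2 * D.Y D.u * D.Y D.ub := by
    rw [← h1, D.relb1]
    have h := congrArg D.Y D.hu
    simp only [map_add, map_smul, smul_eq_mul] at h ⊢
    rw [← h]; ring
  -- `K̄ζ = M̄⁻¹H̄ē − 2(yψ)ū` for `ζ = K̄ē − S₁ψ`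
  have h3 : D.Kb (D.Kb D.eb - D.S1 D.ψ) + (2 * D.Y D.ψ) • D.ub
      = D.Kb (D.Kb D.ub) + (2 * D.swap.a) • D.ub + (2 * D.Y D.ub) • D.ψb := by
    apply D.swap.M_inj
    refine Eq.trans ?_ D.swap.M_He.symm
    change (D.Kb (D.Kb D.eb - D.S1 D.ψ) + (2 * D.Y D.ψ) • D.ub)
      + D.S2 (D.T1 (D.Kb (D.Kb D.eb - D.S1 D.ψ) + (2 * D.Y D.ψ) • D.ub)) = D.Kb (D.Kb D.eb)
    have h4 : D.T2 (D.Kb D.eb - D.S1 D.ψ) = D.ψ := by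
      rw [map_sub, ← D.hψ]; abel
    rw [map_add, map_add, map_smul, map_smul, ← D.relb2, h4, map_sub, D.rel1]
    have h := D.hub
    generalize D.S2 (D.T1 D.ub) = z at h ⊢
    rw [← h]
    module
  have h5 := congrArg D.Y h3
  have h6 : D.swap.a = D.Y (D.K (D.T1 D.ub)) := rfl
  simp only [map_add, map_sub, map_smul, smul_eq_mul, h6, h2] at h5
  rw [β]
  linear_combination h5

end DressingData

/-! ### Derivatives of the Taylor coefficients -/

theorem HasDerivAt.of_eq {f g : ℝ → ℂ} {f' g' : ℂ} {x : ℝ} (h : HasDerivAt f f' x)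
    (hf : ∀ s, g s = f s) (hg : g' = f') : HasDerivAt g g' x := by
  rw [hg, show g = f from funext hf]; exact h

open Polynomial in
/-- The operator `h ↦ h' + h G'`, i.e. `d/dz` acting on `h e^G`. -/
def twDer (G : ℂ[X]) : ℂ[X] →ₗ[ℂ] ℂ[X] :=
  Polynomial.derivative + LinearMap.mulRight ℂ (Polynomial.derivative G)

open Polynomial in
theorem twDer_apply (G h : ℂ[X]) :
    twDer G h = Polynomial.derivative h + h * Polynomial.derivative G := rfl

open Polynomial in
/-- `∂^l (h e^G) = (twDer G ^ l h) e^G`, so that all `k`-derivatives of the exponential stay within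
polynomials in `k`. -/
theorem iteratedDeriv_mul_exp (G h : ℂ[X]) (l : ℕ) :
    iteratedDeriv l (fun z : ℂ => h.eval z * Complex.exp (G.eval z))
      = fun z => ((twDer G ^ l) h).eval z * Complex.exp (G.eval z) := by
  induction l generalizing h with
  | zero => simp
  | succ l ih =>
    have hd : deriv (fun z : ℂ => h.eval z * Complex.exp (G.eval z))
        = fun z => (twDer G h).eval z * Complex.exp (G.eval z) := by
      funext z
      have := (h.hasDerivAt z).mul (G.hasDerivAt z).cexp
      refine this.deriv.trans ?_
      simp only [twDer_apply, eval_add, eval_mul]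
      ring
    rw [iteratedDeriv_succ', hd, ih, pow_succ]
    rfl

open Polynomial in
/-- `d/ds` of the `l`-th derivative of `h e^{A+sB}` is the `l`-th derivative of `hB e^{A+sB}`. -/
theorem hasDerivAt_twDer (A B h : ℂ[X]) (l : ℕ) (z : ℂ) (s : ℝ) :
    HasDerivAt (fun s : ℝ => ((twDer (A + C (s : ℂ) * B) ^ l) h).eval z
        * Complex.exp ((A + C (s : ℂ) * B).eval z))
      (((twDer (A + C (s : ℂ) * B) ^ l) (h * B)).eval z
        * Complex.exp ((A + C (s : ℂ) * B).eval z)) s := by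
  induction l generalizing h with
  | zero =>
    have h1 : HasDerivAt (fun s : ℝ => (s : ℂ)) 1 s := Complex.ofRealCLM.hasDerivAt
    have h2 := ((((h1.mul_const (B.eval z)).const_add (A.eval z)).cexp).const_mul (h.eval z))
    simp only [pow_zero, Module.End.one_apply, eval_add, eval_mul, eval_C]
    refine h2.of_eq (fun _ => rfl) ?_
    ring
  | succ l ih =>
    have h1 : HasDerivAt (fun s : ℝ => (s : ℂ)) 1 s := Complex.ofRealCLM.hasDerivAt
    have key : ∀ (s : ℝ) (g : ℂ[X]), (twDer (A + C (s : ℂ) * B) ^ (l + 1)) g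
        = (twDer (A + C (s : ℂ) * B) ^ l)
            (Polynomial.derivative g + g * Polynomial.derivative A)
          + (s : ℂ) • (twDer (A + C (s : ℂ) * B) ^ l) (g * Polynomial.derivative B) := by
      intro s g
      rw [pow_succ, Module.End.mul_apply, twDer_apply, ← map_smul, ← map_add]
      congr 1
      simp only [derivative_add, derivative_mul, derivative_C, zero_mul, zero_add, smul_eq_C_mul]
      ring
    have h2 := (ih (Polynomial.derivative h + h * Polynomial.derivative A)).add
      (h1.mul (ih (h * Polynomial.derivative B)))
    have e1 : (h.derivative + h * A.derivative) * B + h * B.derivative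
          = (h * B).derivative + (h * B) * A.derivative := by
      rw [derivative_mul]; ring
    have e2 : h * B.derivative * B = h * B * B.derivative := by ring
    rw [key, ← e1, ← e2, map_add]
    refine h2.of_eq (fun s => ?_) ?_
    · rw [key]
      simp only [eval_add, eval_smul, smul_eq_mul, Pi.add_apply, Pi.mul_apply]
      ring
    · simp only [eval_add, eval_smul, smul_eq_mul]
      ring

open Polynomial in
/-- Leibniz rule for the `(l+1)`-st derivative of `z · h e^G`. -/
theorem twDer_pow_X_mul (G h : ℂ[X]) (l : ℕ) :
    (twDer G ^ (l + 1)) (X * h) = X * (twDer G ^ (l + 1)) h + ((l : ℂ) + 1) • (twDer G ^ l) h := by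
  have h0 : ∀ g : ℂ[X], twDer G (X * g) = g + X * twDer G g := by
    intro g
    simp only [twDer_apply, derivative_mul, derivative_X]
    ring
  induction l generalizing h with
  | zero => simp [h0, add_comm]
  | succ l ih =>
    rw [pow_succ, Module.End.mul_apply, h0, map_add, ih, ← Module.End.mul_apply, ← pow_succ,
      ← Module.End.mul_apply, ← pow_succ]
    push_cast
    module

open Polynomial in
/-- `Σ_{m ≥ p} r_m [h e^G]_{m-p}`, with `[·]_l` the `l`-th Taylor coefficient at `κ`. -/
def etaPoly (G : ℂ[X]) (nj : ℕ) (κ : ℂ) (r : ℕ → ℂ) (h : ℂ[X]) (p : ℕ) : ℂ :=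
  ∑ m ∈ Finset.Icc p nj, r m * (1 / (Nat.factorial (m - p) : ℂ) *
    (((twDer G ^ (m - p)) h).eval κ * Complex.exp (G.eval κ)))

/-- The action of `κ + shift` on sequences: multiplication by the spectral parameter, seen on
Taylor coefficients at `κ`. Sequences are indexed by all of `ℕ` and vanish beyond the order of the
pole, so no truncation is needed. -/
def sh (κ : ℂ) (v : ℕ → ℂ) (p : ℕ) : ℂ := κ * v p + v (p + 1)

open Polynomial in
/-- Multiplying by the spectral parameter acts on Taylor coefficients at `κ` as `sh κ`. -/
theorem etaPoly_X_mul (G : ℂ[X]) (nj : ℕ) (κ : ℂ) (r : ℕ → ℂ) (h : ℂ[X]) :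
    etaPoly G nj κ r (X * h) = sh κ (etaPoly G nj κ r h) := by
  funext p
  rw [sh]
  rcases lt_or_ge nj p with hp | hp
  · simp [etaPoly, Finset.Icc_eq_empty_of_lt hp, Finset.Icc_eq_empty_of_lt (Nat.lt_succ_of_lt hp)]
  · have hI : Finset.Icc p nj = insert p (Finset.Icc (p + 1) nj) := by
      ext m; simp only [Finset.mem_Icc, Finset.mem_insert]; omega
    have hn : p ∉ Finset.Icc (p + 1) nj := by simp
    rw [etaPoly, etaPoly, hI, Finset.sum_insert hn, Finset.sum_insert hn, mul_add, add_assoc,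
      etaPoly, Finset.mul_sum, ← Finset.sum_add_distrib]
    congr 1
    · simp only [tsub_self, pow_zero, Module.End.one_apply, eval_mul, eval_X]; ring
    · refine Finset.sum_congr rfl fun m hm => ?_
      obtain ⟨l, rfl⟩ : ∃ l, m = p + 1 + l := ⟨m - (p + 1), by simp at hm; omega⟩
      rw [show p + 1 + l - p = l + 1 by omega, show p + 1 + l - (p + 1) = l by omega,
        twDer_pow_X_mul, Nat.factorial_succ]
      have h1 : (Nat.factorial l : ℂ) ≠ 0 := by exact_mod_cast Nat.factorial_ne_zero l
      have h2 : (l : ℂ) + 1 ≠ 0 := by exact_mod_cast Nat.succ_ne_zero l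
      simp only [eval_add, eval_mul, eval_X, eval_smul, smul_eq_mul]
      push_cast
      field_simp

open Polynomial in
theorem etaPoly_C_mul (G : ℂ[X]) (nj : ℕ) (κ : ℂ) (r : ℕ → ℂ) (c : ℂ) (h : ℂ[X]) (p : ℕ) :
    etaPoly G nj κ r (C c * h) p = c * etaPoly G nj κ r h p := by
  rw [etaPoly, etaPoly, Finset.mul_sum]
  refine Finset.sum_congr rfl fun m _ => ?_
  rw [← smul_eq_C_mul, map_smul, eval_smul, smul_eq_mul]
  ring

open Polynomial in
/-- The phase `-2ik²(x + 2k²t)` as a polynomial in `k`. -/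
def phase (x t : ℝ) : ℂ[X] := C (-2 * I) * X ^ 2 * (C (x : ℂ) + 2 * X ^ 2 * C (t : ℂ))

open Polynomial in
theorem etaMP_eq (nj : ℕ) (κ : ℂ) (r : ℕ → ℂ) (p : ℕ) (x t : ℝ) :
    etaMP nj κ r p x t = etaPoly (phase x t) nj κ r 1 p := by
  rw [etaMP, etaPoly]
  refine Finset.sum_congr rfl fun m _ => ?_
  have := iteratedDeriv_mul_exp (phase x t) 1 (m - p)
  rw [flZBC, ← congrFun this κ]
  congr 4
  funext z
  simp only [phase, eval_mul, eval_C, eval_pow, eval_X, eval_add, eval_one, eval_ofNat]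
  ring_nf

open Polynomial in
theorem hasDerivAt_etaPoly (A B h : ℂ[X]) (nj : ℕ) (κ : ℂ) (r : ℕ → ℂ) (p : ℕ) (s : ℝ) :
    HasDerivAt (fun s : ℝ => etaPoly (A + C (s : ℂ) * B) nj κ r h p)
      (etaPoly (A + C (s : ℂ) * B) nj κ r (h * B) p) s :=
  HasDerivAt.fun_sum fun _ _ => ((hasDerivAt_twDer A B h _ κ s).const_mul _).const_mul _

open Polynomial in
/-- `∂_x` multiplies the exponential by `-2ik²`. -/
theorem hasDerivAt_eta_x (nj : ℕ) (κ : ℂ) (r : ℕ → ℂ) (p : ℕ) (x t : ℝ) :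
    HasDerivAt (fun s => etaMP nj κ r p s t)
      (-2 * I * sh κ (sh κ fun p => etaMP nj κ r p x t) p) x := by
  have hG : ∀ s : ℝ, phase s t
      = C (-4 * I) * X ^ 4 * C (t : ℂ) + C (s : ℂ) * (C (-2 * I) * (X * (X * 1))) := by
    intro s
    simp only [phase, map_mul, map_neg, map_ofNat]
    ring
  have h := hasDerivAt_etaPoly (C (-4 * I) * X ^ 4 * C (t : ℂ)) (C (-2 * I) * (X * (X * 1))) 1
    nj κ r p x
  simp only [etaMP_eq]
  simp only [← hG, one_mul, etaPoly_C_mul, etaPoly_X_mul] at h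
  exact h

open Polynomial in
/-- `∂_t` multiplies the exponential by `-4ik⁴`. -/
theorem hasDerivAt_eta_t (nj : ℕ) (κ : ℂ) (r : ℕ → ℂ) (p : ℕ) (x t : ℝ) :
    HasDerivAt (fun s => etaMP nj κ r p x s)
      (-4 * I * sh κ (sh κ (sh κ (sh κ fun p => etaMP nj κ r p x t))) p) t := by
  have hG : ∀ s : ℝ, phase x s
      = C (-2 * I) * X ^ 2 * C (x : ℂ) + C (s : ℂ) * (C (-4 * I) * (X * (X * (X * (X * 1))))) := by
    intro s
    simp only [phase, map_mul, map_neg, map_ofNat]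
    ring
  have h := hasDerivAt_etaPoly (C (-2 * I) * X ^ 2 * C (x : ℂ))
    (C (-4 * I) * (X * (X * (X * (X * 1))))) 1 nj κ r p t
  simp only [etaMP_eq]
  simp only [← hG, one_mul, etaPoly_C_mul, etaPoly_X_mul] at h
  exact h

theorem etaMP_eq_zero {nj : ℕ} (κ : ℂ) (r : ℕ → ℂ) {p : ℕ} (hp : nj < p) (x t : ℝ) :
    etaMP nj κ r p x t = 0 := by
  simp [etaMP, Finset.Icc_eq_empty_of_lt hp]

/-! ### The double sums -/

/-- Coefficients of the expansion `(d + ε)^{-q} = Σ_s c_s ε^s`. -/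
def wCoef (d : ℂ) (q s : ℕ) : ℂ := (Nat.choose (q + s - 1) s : ℂ) * (-1) ^ s / d ^ (s + q)

/-- The double sum is a fixed linear combination of the conjugated `η_{j,l}`: interchange the two
sums. -/
theorem wSumMP_eq (nj : ℕ) (κ : ℂ) (r : ℕ → ℂ) (d : ℂ) (p q : ℕ) (x t : ℝ) :
    wSumMP nj κ r d p q x t
      = ∑ s ∈ Finset.range (nj + 1), wCoef d q s * conj (etaMP nj κ r (p + s) x t) := by
  simp only [wSumMP, etaMP, map_sum, Finset.mul_sum]
  rw [Finset.sum_comm' (t' := Finset.range (nj + 1)) (s' := fun s => Finset.Icc (p + s) nj)]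
  · refine Finset.sum_congr rfl fun s _ => Finset.sum_congr rfl fun m _ => ?_
    rw [wCoef, map_mul, Nat.sub_sub]
    ring
  · intro m s
    simp only [Finset.mem_Icc, Finset.mem_range]
    omega

theorem wSumMP_eq_zero {nj : ℕ} (κ : ℂ) (r : ℕ → ℂ) (d : ℂ) {p : ℕ} (hp : nj < p) (q : ℕ)
    (x t : ℝ) : wSumMP nj κ r d p q x t = 0 := by
  simp [wSumMP, Finset.Icc_eq_empty_of_lt hp]

/-- At `q = 0` the coefficients are those of `(d + ε)^0 = 1`. The truncated `q + s - 1` is harmless: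
at `s = 0` it gives `C(0, 0) = 1`, at `s > 0` it gives `C(s - 1, s) = 0`. -/
theorem wSumMP_zero (nj : ℕ) (κ : ℂ) (r : ℕ → ℂ) (d : ℂ) (p : ℕ) (x t : ℝ) :
    wSumMP nj κ r d p 0 x t = conj (etaMP nj κ r p x t) := by
  rw [wSumMP_eq, Finset.sum_range_succ', Finset.sum_eq_zero]
  · simp [wCoef]
  · intro s _
    simp [wCoef]

/-- `(d + ε)·(d + ε)^{-(q+1)} = (d + ε)^{-q}` read on coefficients. -/
theorem wSumMP_rec (nj : ℕ) (κ : ℂ) (r : ℕ → ℂ) {d : ℂ} (hd : d ≠ 0) (p q : ℕ) (x t : ℝ) :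
    sh d (fun p => wSumMP nj κ r d p (q + 1) x t) p = wSumMP nj κ r d p q x t := by
  simp only [sh, wSumMP_eq]
  rw [Finset.sum_range_succ', Finset.sum_range_succ (n := nj),
    Finset.sum_range_succ' (fun s => wCoef d q s * _),
    etaMP_eq_zero κ r (show nj < p + 1 + nj by omega), map_zero, mul_zero, mul_add,
    add_zero, add_zero, Finset.mul_sum, add_right_comm, ← Finset.sum_add_distrib]
  congr 1
  · refine Finset.sum_congr rfl fun s _ => ?_
    rw [show p + 1 + s = p + (s + 1) by omega, wCoef, wCoef, wCoef,
      show q + 1 + (s + 1) - 1 = q + s + 1 by omega, show q + 1 + s - 1 = q + s by omega,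
      show q + (s + 1) - 1 = q + s by omega, Nat.choose_succ_succ]
    push_cast
    field_simp
    ring
  · simp only [wCoef, Nat.choose_zero_right]
    field_simp
    simp only [zero_add]
    ring

theorem hasDerivAt_conj {f : ℝ → ℂ} {f' : ℂ} {x : ℝ} (h : HasDerivAt f f' x) :
    HasDerivAt (fun s => conj (f s)) (conj f') x := h.star

/-- The combinations in `wSumMP_eq` intertwine `sh κ` with `sh κ̄`. -/
theorem sh_wSum (c : ℕ → ℂ) (B : ℕ) (κ : ℂ) (v : ℕ → ℂ) :
    (fun p => ∑ s ∈ Finset.range B, c s * conj (sh κ v (p + s)))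
      = sh (conj κ) (fun p => ∑ s ∈ Finset.range B, c s * conj (v (p + s))) := by
  funext p
  simp only [sh, Finset.mul_sum, ← Finset.sum_add_distrib]
  refine Finset.sum_congr rfl fun s _ => ?_
  rw [show p + 1 + s = p + s + 1 by omega]
  simp only [map_add, map_mul]
  ring

theorem hasDerivAt_wSum_x (nj : ℕ) (κ : ℂ) (r : ℕ → ℂ) (d : ℂ) (p q : ℕ) (x t : ℝ) :
    HasDerivAt (fun s => wSumMP nj κ r d p q s t)
      (2 * I * sh (conj κ) (sh (conj κ) fun p => wSumMP nj κ r d p q x t) p) x := by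
  simp only [wSumMP_eq]
  rw [← sh_wSum _ _ _ (fun p => etaMP nj κ r p x t), ← sh_wSum _ _ _ (sh κ _), Finset.mul_sum]
  refine HasDerivAt.fun_sum fun s _ => ?_
  refine ((hasDerivAt_conj (hasDerivAt_eta_x nj κ r (p + s) x t)).const_mul (wCoef d q s)).of_eq
    (fun _ => rfl) ?_
  simp only [map_mul, map_neg, map_ofNat, conj_I]
  ring

theorem hasDerivAt_wSum_t (nj : ℕ) (κ : ℂ) (r : ℕ → ℂ) (d : ℂ) (p q : ℕ) (x t : ℝ) :
    HasDerivAt (fun s => wSumMP nj κ r d p q x s)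
      (4 * I * sh (conj κ) (sh (conj κ) (sh (conj κ) (sh (conj κ)
        fun p => wSumMP nj κ r d p q x t))) p) t := by
  simp only [wSumMP_eq]
  rw [← sh_wSum _ _ _ (fun p => etaMP nj κ r p x t), ← sh_wSum _ _ _ (sh κ _),
    ← sh_wSum _ _ _ (sh κ (sh κ _)), ← sh_wSum _ _ _ (sh κ (sh κ (sh κ _))), Finset.mul_sum]
  refine HasDerivAt.fun_sum fun s _ => ?_
  refine ((hasDerivAt_conj (hasDerivAt_eta_t nj κ r (p + s) x t)).const_mul (wCoef d q s)).of_eq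
    (fun _ => rfl) ?_
  simp only [map_mul, map_neg, map_ofNat, conj_I]
  ring

/-! ### Calculus for vectors and matrices -/

section Calculus

variable {ι : Type*}

/-- Entrywise derivative of a vector-valued function. -/
def VecDeriv (w : ℝ → ι → ℂ) (w' : ι → ℂ) (s : ℝ) : Prop :=
  ∀ i, HasDerivAt (fun s => w s i) (w' i) s

/-- Entrywise derivative of a matrix-valued function. -/
def MatDeriv (A : ℝ → Matrix ι ι ℂ) (A' : Matrix ι ι ℂ) (s : ℝ) : Prop :=
  ∀ i j, HasDerivAt (fun s => A s i j) (A' i j) s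

theorem MatDeriv.const (A : Matrix ι ι ℂ) (s : ℝ) : MatDeriv (fun _ => A) 0 s :=
  fun i j => hasDerivAt_const s (A i j)

variable [Fintype ι]

theorem MatDeriv.mulVec {A : ℝ → Matrix ι ι ℂ} {A' : Matrix ι ι ℂ} {w : ℝ → ι → ℂ} {w' : ι → ℂ}
    {s : ℝ} (hA : MatDeriv A A' s) (hw : VecDeriv w w' s) :
    VecDeriv (fun s => A s *ᵥ w s) (A' *ᵥ w s + A s *ᵥ w') s := by
  intro i
  have h := HasDerivAt.fun_sum (u := Finset.univ) fun j _ => (hA i j).mul (hw j)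
  refine h.of_eq (fun _ => rfl) ?_
  rw [Finset.sum_add_distrib]
  rfl

theorem MatDeriv.mul {A B : ℝ → Matrix ι ι ℂ} {A' B' : Matrix ι ι ℂ}
    {s : ℝ} (hA : MatDeriv A A' s) (hB : MatDeriv B B' s) :
    MatDeriv (fun s => A s * B s) (A' * B s + A s * B') s := by
  intro i j
  exact hA.mulVec (w := fun s i => B s i j) (w' := fun i => B' i j) (fun i => hB i j) i

theorem VecDeriv.map {w : ℝ → ι → ℂ} {w' : ι → ℂ} {s : ℝ} (hw : VecDeriv w w' s)
    (φ : (ι → ℂ) →ₗ[ℂ] ℂ) : HasDerivAt (fun s => φ (w s)) (φ w') s := by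
  classical
  have h := HasDerivAt.fun_sum (u := Finset.univ) fun j _ =>
    (hw j).mul_const (φ fun i => if j = i then 1 else 0)
  refine h.of_eq (fun s => ?_) ?_ <;> exact φ.pi_apply_eq_sum_univ _

variable [DecidableEq ι]

theorem differentiableAt_det {A : ℝ → Matrix ι ι ℂ} {s : ℝ}
    (hA : ∀ i j, DifferentiableAt ℝ (fun s => A s i j) s) :
    DifferentiableAt ℝ (fun s => (A s).det) s := by
  simp only [Matrix.det_apply]
  refine DifferentiableAt.fun_sum fun σ _ => DifferentiableAt.const_smul ?_ _
  exact DifferentiableAt.fun_finsetProd fun i _ => hA _ _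

/-- If `M w = b` with `M` invertible, then `w` is differentiable and `M w' = b' - M' w`. -/
theorem VecDeriv.solve {M : ℝ → Matrix ι ι ℂ} {M' : Matrix ι ι ℂ} {b w : ℝ → ι → ℂ}
    {b' w' : ι → ℂ} {s : ℝ} (hM : MatDeriv M M' s) (hb : VecDeriv b b' s)
    (hdet : ∀ s, (M s).det ≠ 0) (hw : ∀ s, w s = (M s)⁻¹ *ᵥ b s)
    (hw' : M s *ᵥ w' = b' - M' *ᵥ w s) : VecDeriv w w' s := by
  have hinv : ∀ i j, DifferentiableAt ℝ (fun s => (M s)⁻¹ i j) s := by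
    intro i j
    simp only [Matrix.inv_def, Matrix.smul_apply, Ring.inverse_eq_inv', Matrix.adjugate_apply,
      smul_eq_mul]
    refine DifferentiableAt.mul
      ((differentiableAt_det fun i j => (hM i j).differentiableAt).inv (hdet s)) ?_
    refine differentiableAt_det fun a c => ?_
    by_cases h : a = j
    · subst h; simp
    · simpa [Matrix.updateRow_ne h] using (hM a c).differentiableAt
  have hM1 : MatDeriv (fun s => (M s)⁻¹) (Matrix.of fun i j => deriv (fun s => (M s)⁻¹ i j) s) s :=
    fun i j => (hinv i j).hasDerivAt
  have h1 := hM1.mulVec hb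
  set d := (Matrix.of fun i j => deriv (fun s => (M s)⁻¹ i j) s) *ᵥ b s + (M s)⁻¹ *ᵥ b' with hd
  have h2 : VecDeriv w d s := by
    rw [show w = fun s => (M s)⁻¹ *ᵥ b s from funext hw]; exact h1
  have hMw : (fun s => M s *ᵥ w s) = b := by
    funext s
    rw [hw, Matrix.mulVec_mulVec, Matrix.mul_nonsing_inv _ (isUnit_iff_ne_zero.2 (hdet s)),
      Matrix.one_mulVec]
  have h3 := hM.mulVec h2
  rw [hMw] at h3
  have h4 : M' *ᵥ w s + M s *ᵥ d = b' := funext fun i => (h3 i).unique (hb i)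
  have h5 : M s *ᵥ d = M s *ᵥ w' := by rw [hw', ← h4]; abel
  have h6 : d = w' := by
    have := congrArg (fun v => (M s)⁻¹ *ᵥ v) h5
    simpa [Matrix.mulVec_mulVec, Matrix.nonsing_inv_mul _ (isUnit_iff_ne_zero.2 (hdet s))]
      using this
  rwa [h6] at h2

/-- Matrix determinant lemma for `A + (A w) vᵀ`. -/
theorem det_add_vecMulVec_mulVec (A : Matrix ι ι ℂ) (w v : ι → ℂ) :
    (A + Matrix.vecMulVec (A *ᵥ w) v).det = A.det * (1 + v ⬝ᵥ w) := by
  rw [← Matrix.det_one_add_replicateCol_mul_replicateRow (ι := Unit), ← Matrix.det_mul,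
    Matrix.mul_add, Matrix.mul_one, ← Matrix.vecMulVec_eq, Matrix.mul_vecMulVec]

end Calculus

/-! ### Jordan blocks and the Sylvester relations -/

section Reduction

/-- Index set after folding the two copies attached to each pole. -/
abbrev Idx1 (N : ℕ) (n : Fin N → ℕ) : Type := (j : Fin N) × Fin (n j)

variable {N : ℕ} {n : Fin N → ℕ}

/-- The block matrix of upper Jordan blocks with eigenvalues `κ j` and sizes `n j`. -/
def jordan (n : Fin N → ℕ) (κ : Fin N → ℂ) : Matrix (Idx1 N n) (Idx1 N n) ℂ :=
  Matrix.of fun a b => (if a = b then κ a.1 else 0)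
    + (if a.1 = b.1 ∧ a.2.val + 1 = b.2.val then 1 else 0)

theorem jordan_conj (κ : Fin N → ℂ) :
    (jordan n κ).map (starRingEnd ℂ) = jordan n fun j => conj (κ j) := by
  ext a b
  simp only [jordan, Matrix.map_apply, Matrix.of_apply, map_add]
  congr 1 <;> split_ifs <;> simp

/-- On zero-extended sequences the Jordan matrix acts as `sh`. -/
theorem jordan_mulVec (κ : Fin N → ℂ) (v : Fin N → ℕ → ℂ) (hv : ∀ j p, n j < p → v j p = 0)
    (a : Idx1 N n) :
    (jordan n κ *ᵥ fun b => v b.1 (b.2.val + 1)) a = sh (κ a.1) (v a.1) (a.2.val + 1) := by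
  obtain ⟨j, p⟩ := a
  simp only [Matrix.mulVec, dotProduct, jordan, Matrix.of_apply, add_mul, Finset.sum_add_distrib,
    sh, ite_mul, zero_mul, one_mul, Finset.sum_ite_eq, Finset.mem_univ, if_true]
  congr 1
  by_cases h : p.val + 1 < n j
  · rw [Finset.sum_eq_single (⟨j, ⟨p.val + 1, h⟩⟩ : Idx1 N n)]
    · simp
    · rintro ⟨l, q⟩ _ hb
      rw [if_neg]
      rintro ⟨h1, h2⟩
      dsimp only at h1 h2
      subst h1
      apply hb
      congr 1
      exact Fin.ext h2.symm
    · simp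
  · rw [hv j _ (by omega), Finset.sum_eq_zero]
    rintro ⟨l, q⟩ _
    rw [if_neg]
    rintro ⟨h1, h2⟩
    dsimp only at h1 h2
    subst h1
    omega

theorem jordan_mul (κ : Fin N → ℂ) {A : Matrix (Idx1 N n) (Idx1 N n) ℂ}
    (g : Idx1 N n → Fin N → ℕ → ℂ) (hA : ∀ a b, A a b = g b a.1 (a.2.val + 1))
    (hg : ∀ b j p, n j < p → g b j p = 0) (a b : Idx1 N n) :
    (jordan n κ * A) a b = sh (κ a.1) (g b a.1) (a.2.val + 1) := by
  rw [← jordan_mulVec κ (g b) (hg b)]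
  simp only [Matrix.mul_apply, Matrix.mulVec, dotProduct, hA]

theorem mul_jordan (κ : Fin N → ℂ) {A : Matrix (Idx1 N n) (Idx1 N n) ℂ}
    (g : Idx1 N n → Fin N → ℕ → ℂ) (hA : ∀ a b, A a b = g a b.1 (b.2.val + 1))
    (a b : Idx1 N n) :
    (A * jordan n κ) a b = κ b.1 * g a b.1 (b.2.val + 1)
      + if b.2.val = 0 then 0 else g a b.1 b.2.val := by
  obtain ⟨l, q⟩ := b
  simp only [Matrix.mul_apply, jordan, Matrix.of_apply, mul_add, Finset.sum_add_distrib,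
    mul_ite, mul_zero, mul_one, Finset.sum_ite_eq', Finset.mem_univ, if_true, hA]
  congr 1
  · ring
  by_cases h : q.val = 0
  · rw [if_pos h, Finset.sum_eq_zero]
    rintro ⟨j, p⟩ _
    rw [if_neg]
    rintro ⟨h1, h2⟩
    dsimp only at h2
    omega
  · have hq : q.val - 1 < n l := by omega
    rw [if_neg h, Finset.sum_eq_single (⟨l, ⟨q.val - 1, hq⟩⟩ : Idx1 N n)]
    · have : q.val - 1 + 1 = q.val := by omega
      simp [this]
    · rintro ⟨j, p⟩ _ hb
      rw [if_neg]
      rintro ⟨h1, h2⟩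
      dsimp only at h1 h2
      subst h1
      apply hb
      congr 1
      apply Fin.ext
      dsimp only
      omega
    · simp

theorem sh_congr_zero {κ : ℂ} {v : ℕ → ℂ} {m : ℕ} (hv : ∀ p, m < p → v p = 0) (p : ℕ)
    (hp : m < p) : sh κ v p = 0 := by
  simp [sh, hv p hp, hv (p + 1) (Nat.lt_succ_of_lt hp)]

variable (k : Fin N → ℂ) (r : Fin N → ℕ → ℂ)

/-- Entry of the Cauchy-type matrix `S_ε`, in row `(j, p)` and column `(l, q)`, extended to all
`p q : ℕ`. Positions are counted from `1`; `p > n j` gives `0`. -/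
def sFun (n : Fin N → ℕ) (k : Fin N → ℂ) (r : Fin N → ℕ → ℂ) (ε : ℂ) (x t : ℝ)
    (l : Fin N) (q : ℕ) (j : Fin N) (p : ℕ) : ℂ :=
  wSumMP (n j) (k j) (r j) (conj (k j) - k l) p q x t
    + ε * (-1) ^ q * wSumMP (n j) (k j) (r j) (conj (k j) + k l) p q x t

/-- The matrix `S_ε`, obtained from `Ω` by folding the columns of the two copies of each pole with
signs `ε (-1)^q`. The matrices used are `S₁ = S_{-1}` and `S₂ = S_{+1}`. -/
def sMat (n : Fin N → ℕ) (k : Fin N → ℂ) (r : Fin N → ℕ → ℂ) (ε : ℂ) (x t : ℝ) :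
    Matrix (Idx1 N n) (Idx1 N n) ℂ :=
  Matrix.of fun a b => sFun n k r ε x t b.1 (b.2.val + 1) a.1 (a.2.val + 1)

/-- The vector `e` of the `η_{j,l}`. -/
def eVec (n : Fin N → ℕ) (k : Fin N → ℂ) (r : Fin N → ℕ → ℂ) (x t : ℝ) : Idx1 N n → ℂ :=
  fun a => etaMP (n a.1) (k a.1) (r a.1) (a.2.val + 1) x t

/-- The vector `y` selecting the first entry of each block. -/
def yVec (n : Fin N → ℕ) : Idx1 N n → ℂ := fun a => if a.2.val = 0 then 1 else 0

theorem sFun_zero (ε : ℂ) (x t : ℝ) (l : Fin N) (q : ℕ) (j : Fin N) (p : ℕ) (hp : n j < p) :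
    sFun n k r ε x t l q j p = 0 := by
  simp [sFun, wSumMP_eq_zero _ _ _ hp]

/-- The Sylvester relation `K̄ S_ε = S_{-ε} K + (1 - ε) ē yᵀ`. The condition on the poles makes
`k̄_j - k_l` and `k̄_j + k_l` nonzero. -/
theorem sylvester (hk : ∀ j, 0 < (k j).re * (k j).im) (ε : ℂ) (x t : ℝ) :
    jordan n (fun j => conj (k j)) * sMat n k r ε x t
      = sMat n k r (-ε) x t * jordan n k
        + (1 - ε) • Matrix.vecMulVec (fun a => conj (eVec n k r x t a)) (yVec n) := by
  ext a b
  have hd1 : conj (k a.1) - k b.1 ≠ 0 := by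
    intro h
    have e : k b.1 = conj (k a.1) := (sub_eq_zero.1 h).symm
    have h1 := hk a.1
    have h2 := hk b.1
    rw [e, conj_re, conj_im] at h2
    nlinarith
  have hd2 : conj (k a.1) + k b.1 ≠ 0 := by
    intro h
    have e : k b.1 = -conj (k a.1) := (neg_eq_of_add_eq_zero_right h).symm
    have h1 := hk a.1
    have h2 := hk b.1
    rw [e, neg_re, neg_im, conj_re, conj_im] at h2
    nlinarith
  have r1 := wSumMP_rec (n a.1) (k a.1) (r a.1) hd1 (a.2.val + 1) b.2.val x t
  have r2 := wSumMP_rec (n a.1) (k a.1) (r a.1) hd2 (a.2.val + 1) b.2.val x t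
  rw [jordan_mul (A := sMat n k r ε x t) _ (fun b => sFun n k r ε x t b.1 (b.2.val + 1))
      (fun _ _ => rfl) (fun _ j p hp => sFun_zero k r _ _ _ _ _ j p hp), Matrix.add_apply,
    mul_jordan (A := sMat n k r (-ε) x t) _
      (fun a l q => sFun n k r (-ε) x t l q a.1 (a.2.val + 1)) (fun _ _ => rfl)]
  simp only [sh, sFun, Matrix.smul_apply, Matrix.vecMulVec_apply, yVec, eVec, smul_eq_mul,
    mul_ite, mul_one, mul_zero] at r1 r2 ⊢
  -- only the first column of each block meets `q = 0`, where `wSumMP` becomes the conjugated `e`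
  by_cases h : b.2.val = 0
  · simp only [h, if_true, wSumMP_zero] at r1 r2 ⊢
    linear_combination r1 - ε * r2
  · simp only [h, if_false]
    linear_combination r1 - ε * (-1) ^ b.2.val * r2

theorem sMat_x (ε : ℂ) (x t : ℝ) :
    MatDeriv (fun s => sMat n k r ε s t)
      ((2 * I) • (jordan n (fun j => conj (k j)) * (jordan n (fun j => conj (k j))
        * sMat n k r ε x t))) x := by
  intro a b
  refine HasDerivAt.of_eq ((hasDerivAt_wSum_x (n a.1) (k a.1) (r a.1) _ _ _ x t).add
    ((hasDerivAt_wSum_x (n a.1) (k a.1) (r a.1) _ _ _ x t).const_mul _)) (fun _ => rfl) ?_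
  have h0 := fun (b : Idx1 N n) j p hp => sFun_zero (n := n) k r ε x t b.1 (b.2.val + 1) j p hp
  have h1 := fun (b : Idx1 N n) j p hp => sh_congr_zero (κ := conj (k j)) (h0 b j) p hp
  have e1 := jordan_mul (A := sMat n k r ε x t) (fun j => conj (k j)) _ (fun _ _ => rfl) h0
  have e2 := jordan_mul (fun j => conj (k j)) _ e1 h1
  rw [Matrix.smul_apply, e2]
  simp only [sh, sFun, smul_eq_mul]
  ring

theorem sMat_t (ε : ℂ) (x t : ℝ) :
    MatDeriv (fun s => sMat n k r ε x s)
      ((4 * I) • (jordan n (fun j => conj (k j)) * (jordan n (fun j => conj (k j))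
        * (jordan n (fun j => conj (k j)) * (jordan n (fun j => conj (k j))
        * sMat n k r ε x t))))) t := by
  intro a b
  refine HasDerivAt.of_eq ((hasDerivAt_wSum_t (n a.1) (k a.1) (r a.1) _ _ _ x t).add
    ((hasDerivAt_wSum_t (n a.1) (k a.1) (r a.1) _ _ _ x t).const_mul _)) (fun _ => rfl) ?_
  have h0 := fun (b : Idx1 N n) j p hp => sFun_zero (n := n) k r ε x t b.1 (b.2.val + 1) j p hp
  have h1 := fun (b : Idx1 N n) j p hp => sh_congr_zero (κ := conj (k j)) (h0 b j) p hp
  have h2 := fun (b : Idx1 N n) j p hp => sh_congr_zero (κ := conj (k j)) (h1 b j) p hp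
  have h3 := fun (b : Idx1 N n) j p hp => sh_congr_zero (κ := conj (k j)) (h2 b j) p hp
  have e1 := jordan_mul (A := sMat n k r ε x t) (fun j => conj (k j)) _ (fun _ _ => rfl) h0
  have e2 := jordan_mul (fun j => conj (k j)) _ e1 h1
  have e3 := jordan_mul (fun j => conj (k j)) _ e2 h2
  have e4 := jordan_mul (fun j => conj (k j)) _ e3 h3
  rw [Matrix.smul_apply, e4]
  simp only [sh, sFun, smul_eq_mul]
  ring

theorem eVec_x (x t : ℝ) :
    VecDeriv (fun s => eVec n k r s t)
      ((-2 * I) • (jordan n k *ᵥ (jordan n k *ᵥ eVec n k r x t))) x := by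
  intro a
  have h0 := fun j p hp => etaMP_eq_zero (nj := n j) (k j) (r j) (p := p) hp x t
  refine (hasDerivAt_eta_x (n a.1) (k a.1) (r a.1) _ x t).of_eq (fun _ => rfl) ?_
  have h1 : jordan n k *ᵥ eVec n k r x t = _ :=
    funext (jordan_mulVec k (fun j p => etaMP (n j) (k j) (r j) p x t) h0)
  rw [Pi.smul_apply, h1, jordan_mulVec k (fun j => sh (k j) _)
    (fun j => sh_congr_zero (h0 j)), smul_eq_mul]

theorem eVec_t (x t : ℝ) :
    VecDeriv (fun s => eVec n k r x s)
      ((-4 * I) • (jordan n k *ᵥ (jordan n k *ᵥ (jordan n k *ᵥ (jordan n k *ᵥ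
        eVec n k r x t))))) t := by
  intro a
  refine (hasDerivAt_eta_t (n a.1) (k a.1) (r a.1) _ x t).of_eq (fun _ => rfl) ?_
  have step : ∀ v : Fin N → ℕ → ℂ, (∀ j p, n j < p → v j p = 0) →
      (jordan n k *ᵥ fun b => v b.1 (b.2.val + 1))
          = (fun b => (fun j => sh (k j) (v j)) b.1 (b.2.val + 1))
        ∧ ∀ j p, n j < p → (fun j => sh (k j) (v j)) j p = 0 :=
    fun v hv => ⟨funext (jordan_mulVec k v hv), fun j p hp => sh_congr_zero (hv j) p hp⟩
  obtain ⟨v, hv⟩ : ∃ v : Fin N → ℕ → ℂ, v = fun j p => etaMP (n j) (k j) (r j) p x t := ⟨_, rfl⟩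
  have h0 : ∀ j p, n j < p → v j p = 0 := by
    intro j p hp
    rw [hv]
    exact etaMP_eq_zero _ _ hp x t
  have he : eVec n k r x t = fun b => v b.1 (b.2.val + 1) := by rw [hv]; rfl
  have hva : (fun p => etaMP (n a.1) (k a.1) (r a.1) p x t) = v a.1 := by rw [hv]
  obtain ⟨e1, h1⟩ := step v h0
  obtain ⟨e2, h2⟩ := step _ h1
  obtain ⟨e3, h3⟩ := step _ h2
  obtain ⟨e4, -⟩ := step _ h3
  rw [he, hva, e1, e2, e3, e4]
  rfl

end Reduction

/-! ### Folding the two copies of each pole -/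

section Folding

variable {N : ℕ} {n : Fin N → ℕ} (k : Fin N → ℂ) (r : Fin N → ℕ → ℂ)

/-- Entrywise conjugate of `S_ε`. -/
def tMat (n : Fin N → ℕ) (k : Fin N → ℂ) (r : Fin N → ℕ → ℂ) (ε : ℂ) (x t : ℝ) :
    Matrix (Idx1 N n) (Idx1 N n) ℂ :=
  (sMat n k r ε x t).map (starRingEnd ℂ)

/-- The matrix `M = 1 + S̄₂ S₁`. -/
def mMat (n : Fin N → ℕ) (k : Fin N → ℂ) (r : Fin N → ℕ → ℂ) (x t : ℝ) :
    Matrix (Idx1 N n) (Idx1 N n) ℂ :=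
  1 + tMat n k r 1 x t * sMat n k r (-1) x t

/-- The embedding `v ↦ (v, D v)` with `D = diag((-1)^p)`. -/
def liftP (v : Idx1 N n → ℂ) : IdxMP N n → ℂ := fun i =>
  match i with
  | ⟨j, Sum.inl p⟩ => v ⟨j, p⟩
  | ⟨j, Sum.inr p⟩ => (-1) ^ (p.1 + 1) * v ⟨j, p⟩

/-- The embedding `v ↦ (v, -D v)`, i.e. `I_σ` applied to `liftP v`. -/
def liftSig (v : Idx1 N n → ℂ) : IdxMP N n → ℂ := fun i =>
  match i with
  | ⟨j, Sum.inl p⟩ => v ⟨j, p⟩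
  | ⟨j, Sum.inr p⟩ => -((-1) ^ (p.1 + 1) * v ⟨j, p⟩)

theorem Isigma_mulVec (v : Idx1 N n → ℂ) : IsigmaMP N n *ᵥ liftSig v = liftP v := by
  funext i
  simp only [Matrix.mulVec, dotProduct, IsigmaMP, Matrix.of_apply, ite_mul, zero_mul,
    Finset.sum_ite_eq, Finset.mem_univ, if_true]
  rcases i with ⟨j, p | p⟩ <;> simp [liftP, liftSig]

theorem liftP_add (v w : Idx1 N n → ℂ) : liftP v + liftP w = liftP (v + w) := by
  funext i
  rcases i with ⟨j, p | p⟩ <;> simp [liftP, mul_add]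

/-- `Ω` factors through the fold: on `(v, -D v)` it acts as `-S₁`, with image `(w, D w)`. -/
theorem Omega_mulVec (x t : ℝ) (v : Idx1 N n → ℂ) :
    OmegaMP N n k r x t *ᵥ liftSig v = liftP (-(sMat n k r (-1) x t *ᵥ v)) := by
  funext i
  simp only [Matrix.mulVec, dotProduct, Fintype.sum_sigma, Fintype.sum_sum_type]
  rcases i with ⟨j, p | p⟩
  · simp only [liftP, Pi.neg_apply, Matrix.mulVec, dotProduct, Fintype.sum_sigma,
      ← Finset.sum_neg_distrib, ← Finset.sum_add_distrib]
    refine Finset.sum_congr rfl fun l _ => Finset.sum_congr rfl fun q _ => ?_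
    simp only [OmegaMP, Matrix.of_apply, liftSig, sMat, sFun]
    ring
  · simp only [liftP, Pi.neg_apply, Matrix.mulVec, dotProduct, Fintype.sum_sigma,
      ← Finset.sum_neg_distrib, ← Finset.sum_add_distrib, Finset.mul_sum]
    refine Finset.sum_congr rfl fun l _ => Finset.sum_congr rfl fun q _ => ?_
    simp only [OmegaMP, Matrix.of_apply, liftSig, sMat, sFun]
    ring

/-- The conjugate of `Ω` acts on `(v, D v)` as `-S̄₂`. -/
theorem Omega_conj_mulVec (x t : ℝ) (v : Idx1 N n → ℂ) :
    (OmegaMP N n k r x t).map (starRingEnd ℂ) *ᵥ liftP v = liftP (-(tMat n k r 1 x t *ᵥ v)) := by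
  funext i
  simp only [Matrix.mulVec, dotProduct, Fintype.sum_sigma, Fintype.sum_sum_type]
  rcases i with ⟨j, p | p⟩
  · simp only [liftP, Pi.neg_apply, Matrix.mulVec, dotProduct, Fintype.sum_sigma,
      ← Finset.sum_neg_distrib, ← Finset.sum_add_distrib]
    refine Finset.sum_congr rfl fun l _ => Finset.sum_congr rfl fun q _ => ?_
    simp only [OmegaMP, Matrix.of_apply, Matrix.map_apply, tMat, sMat, sFun, map_neg, map_add,
      map_mul, map_pow, map_one]
    ring
  · simp only [liftP, Pi.neg_apply, Matrix.mulVec, dotProduct, Fintype.sum_sigma,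
      ← Finset.sum_neg_distrib, ← Finset.sum_add_distrib, Finset.mul_sum]
    refine Finset.sum_congr rfl fun l _ => Finset.sum_congr rfl fun q _ => ?_
    simp only [OmegaMP, Matrix.of_apply, Matrix.map_apply, tMat, sMat, sFun, map_neg, map_add,
      map_mul, map_pow, map_one]
    ring

/-- `I_σ + Ω*Ω` maps the folded subspace `{(v, -D v)}` to `{(v, D v)}`, acting as `M`. -/
theorem Amat_mulVec (x t : ℝ) (v : Idx1 N n → ℂ) :
    AmatMP N n k r x t *ᵥ liftSig v = liftP (mMat n k r x t *ᵥ v) := by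
  rw [AmatMP, Matrix.add_mulVec, ← Matrix.mulVec_mulVec, Omega_mulVec, Omega_conj_mulVec,
    Isigma_mulVec, liftP_add, Matrix.mulVec_neg, neg_neg, mMat, Matrix.add_mulVec,
    Matrix.one_mulVec, Matrix.mulVec_mulVec]

/-- The column `|η⟩` lies in the folded subspace. -/
theorem liftP_eVec (x t : ℝ) : BvecMP N n k r x t = liftP (eVec n k r x t) := by
  funext i
  rcases i with ⟨j, p | p⟩
  · rfl
  · simp only [BvecMP, liftP, eVec, etaTildeMP, etaMP, Finset.mul_sum, ← Finset.sum_neg_distrib]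
    refine Finset.sum_congr rfl fun m _ => ?_
    ring

theorem Yvec_dot (v : Idx1 N n → ℂ) : YvecMP N n ⬝ᵥ liftSig v = 2 * (yVec n ⬝ᵥ v) := by
  simp only [dotProduct, Fintype.sum_sigma, Fintype.sum_sum_type, Finset.mul_sum,
    ← Finset.sum_add_distrib]
  refine Finset.sum_congr rfl fun j _ => Finset.sum_congr rfl fun p _ => ?_
  simp only [YvecMP, yVec, liftSig, Sum.elim_inl, Sum.elim_inr]
  by_cases h : p.val = 0
  · simp only [h, if_true]; ring
  · simp only [h, if_false]; ring

theorem mMat_det {x t : ℝ} (h : (AmatMP N n k r x t).det ≠ 0) : (mMat n k r x t).det ≠ 0 := by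
  intro h0
  obtain ⟨v, hv, hMv⟩ := Matrix.exists_mulVec_eq_zero_iff.2 h0
  refine h (Matrix.exists_mulVec_eq_zero_iff.1 ⟨liftSig v, fun hz => hv ?_, ?_⟩)
  · funext a
    exact congrFun hz ⟨a.1, Sum.inl a.2⟩
  · rw [Amat_mulVec, hMv]
    funext i
    rcases i with ⟨j, p | p⟩ <;> simp [liftP]

/-- The vector `u = M⁻¹ e`. -/
def uVec (n : Fin N → ℕ) (k : Fin N → ℂ) (r : Fin N → ℕ → ℂ) (x t : ℝ) : Idx1 N n → ℂ :=
  (mMat n k r x t)⁻¹ *ᵥ eVec n k r x t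

/-- The conjugate vector `ē`. -/
def ebVec (n : Fin N → ℕ) (k : Fin N → ℂ) (r : Fin N → ℕ → ℂ) (x t : ℝ) : Idx1 N n → ℂ :=
  starRingEnd ℂ ∘ eVec n k r x t

/-- The vector `ψ = M⁻¹ S̄₂ K̄ ē`. -/
def ψVec (n : Fin N → ℕ) (k : Fin N → ℂ) (r : Fin N → ℕ → ℂ) (x t : ℝ) : Idx1 N n → ℂ :=
  (mMat n k r x t)⁻¹ *ᵥ
    (tMat n k r 1 x t *ᵥ (jordan n (fun j => conj (k j)) *ᵥ ebVec n k r x t))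

/-- The determinant quotient collapses to `q = 4i ⟨y, M⁻¹ e⟩`. -/
theorem qSol_eq {x t : ℝ} (h : (AmatMP N n k r x t).det ≠ 0) :
    qSolMP N n k r x t = 4 * I * (yVec n ⬝ᵥ uVec n k r x t) := by
  have hu : mMat n k r x t *ᵥ uVec n k r x t = eVec n k r x t := by
    rw [uVec, Matrix.mulVec_mulVec,
      Matrix.mul_nonsing_inv _ (isUnit_iff_ne_zero.2 (mMat_det k r h)), Matrix.one_mulVec]
  rw [qSolMP, liftP_eVec, ← hu, ← Amat_mulVec, det_add_vecMulVec_mulVec,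
    mul_div_cancel_left₀ _ h, Yvec_dot]
  ring

theorem conj_mulVec {ι : Type*} [Fintype ι] (A : Matrix ι ι ℂ) (w : ι → ℂ) :
    starRingEnd ℂ ∘ (A *ᵥ w) = A.map (starRingEnd ℂ) *ᵥ (starRingEnd ℂ ∘ w) :=
  funext fun i => RingHom.map_mulVec (starRingEnd ℂ) A w i

theorem map_conj_conj {ι : Type*} (A : Matrix ι ι ℂ) :
    (A.map (starRingEnd ℂ)).map (starRingEnd ℂ) = A := by
  ext i j; simp

/-- The functional `⟨y, ·⟩`. -/
def yLin (n : Fin N → ℕ) : (Idx1 N n → ℂ) →ₗ[ℂ] ℂ where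
  toFun v := yVec n ⬝ᵥ v
  map_add' := dotProduct_add _
  map_smul' c v := dotProduct_smul c _ v

theorem conj_yLin (v : Idx1 N n → ℂ) : conj (yLin n v) = yLin n (starRingEnd ℂ ∘ v) := by
  simp only [yLin, LinearMap.coe_mk, AddHom.coe_mk, dotProduct, map_sum, map_mul, yVec,
    Function.comp, apply_ite (starRingEnd ℂ), map_one, map_zero]

theorem conj_comp_conj {ι : Type*} (w : ι → ℂ) : starRingEnd ℂ ∘ (starRingEnd ℂ ∘ w) = w := by
  funext i; simp

theorem mMat_mulVec (x t : ℝ) (w : Idx1 N n → ℂ) : mMat n k r x t *ᵥ w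
    = w + tMat n k r 1 x t *ᵥ (sMat n k r (-1) x t *ᵥ w) := by
  rw [mMat, Matrix.add_mulVec, Matrix.one_mulVec, Matrix.mulVec_mulVec]

theorem rel1_aux (hk : ∀ j, 0 < (k j).re * (k j).im) (x t : ℝ) (w : Idx1 N n → ℂ) :
    jordan n (fun j => conj (k j)) *ᵥ (sMat n k r (-1) x t *ᵥ w)
      = sMat n k r 1 x t *ᵥ (jordan n k *ᵥ w) + (2 * yLin n w) • ebVec n k r x t := by
  have h := sylvester k r (n := n) hk (-1) x t
  rw [Matrix.mulVec_mulVec, h, neg_neg, Matrix.add_mulVec, ← Matrix.mulVec_mulVec,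
    Matrix.smul_mulVec, Matrix.vecMulVec_mulVec]
  congr 1
  funext a
  simp only [yLin, ebVec, Pi.smul_apply, MulOpposite.smul_eq_mul_unop, smul_eq_mul,
    Function.comp_apply, MulOpposite.unop_op, LinearMap.coe_mk, AddHom.coe_mk]
  ring

theorem rel2_aux (hk : ∀ j, 0 < (k j).re * (k j).im) (x t : ℝ) (w : Idx1 N n → ℂ) :
    jordan n (fun j => conj (k j)) *ᵥ (sMat n k r 1 x t *ᵥ w)
      = sMat n k r (-1) x t *ᵥ (jordan n k *ᵥ w) := by
  have h := sylvester k r (n := n) hk 1 x t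
  rw [Matrix.mulVec_mulVec, h, sub_self, zero_smul, add_zero, ← Matrix.mulVec_mulVec]

theorem conj_jordan (w : Idx1 N n → ℂ) : starRingEnd ℂ ∘ (jordan n k *ᵥ w)
    = jordan n (fun j => conj (k j)) *ᵥ (starRingEnd ℂ ∘ w) := by
  rw [conj_mulVec, jordan_conj]

theorem conj_sMat (ε : ℂ) (x t : ℝ) (w : Idx1 N n → ℂ) :
    starRingEnd ℂ ∘ (sMat n k r ε x t *ᵥ w) = tMat n k r ε x t *ᵥ (starRingEnd ℂ ∘ w) :=
  conj_mulVec _ _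

theorem conj_tMat (ε : ℂ) (x t : ℝ) (w : Idx1 N n → ℂ) :
    starRingEnd ℂ ∘ (tMat n k r ε x t *ᵥ w) = sMat n k r ε x t *ᵥ (starRingEnd ℂ ∘ w) := by
  rw [conj_mulVec, tMat, map_conj_conj]

theorem conj_add_comp {ι : Type*} (v w : ι → ℂ) :
    starRingEnd ℂ ∘ (v + w) = starRingEnd ℂ ∘ v + starRingEnd ℂ ∘ w := by
  funext i; simp

theorem conj_smul_comp {ι : Type*} (c : ℂ) (w : ι → ℂ) :
    starRingEnd ℂ ∘ (c • w) = conj c • (starRingEnd ℂ ∘ w) := by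
  funext i; simp

theorem conj_ebVec (x t : ℝ) : starRingEnd ℂ ∘ ebVec n k r x t = eVec n k r x t :=
  conj_comp_conj _

/-- The dressing data of the pole configuration at a point `(x, t)`. The barred relations are the
conjugates of the unbarred ones. -/
def dress (hk : ∀ j, 0 < (k j).re * (k j).im) {x t : ℝ} (hM : (mMat n k r x t).det ≠ 0) :
    DressingData (Idx1 N n → ℂ) :=
  have hinj : ∀ w, w + tMat n k r 1 x t *ᵥ (sMat n k r (-1) x t *ᵥ w) = 0 → w = 0 := by
    intro w hw
    rw [← mMat_mulVec] at hw
    by_contra h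
    exact hM (Matrix.exists_mulVec_eq_zero_iff.1 ⟨w, h, hw⟩)
  have hu : uVec n k r x t + tMat n k r 1 x t *ᵥ (sMat n k r (-1) x t *ᵥ uVec n k r x t)
      = eVec n k r x t := by
    rw [← mMat_mulVec, uVec, Matrix.mulVec_mulVec,
      Matrix.mul_nonsing_inv _ (isUnit_iff_ne_zero.2 hM), Matrix.one_mulVec]
  have hψ : ψVec n k r x t + tMat n k r 1 x t *ᵥ (sMat n k r (-1) x t *ᵥ ψVec n k r x t)
      = tMat n k r 1 x t *ᵥ (jordan n (fun j => conj (k j)) *ᵥ ebVec n k r x t) := by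
    rw [← mMat_mulVec, ψVec, Matrix.mulVec_mulVec,
      Matrix.mul_nonsing_inv _ (isUnit_iff_ne_zero.2 hM), Matrix.one_mulVec]
  { K := (jordan n k).mulVecLin
    Kb := (jordan n fun j => conj (k j)).mulVecLin
    S1 := (sMat n k r (-1) x t).mulVecLin
    S2 := (sMat n k r 1 x t).mulVecLin
    T1 := (tMat n k r (-1) x t).mulVecLin
    T2 := (tMat n k r 1 x t).mulVecLin
    Y := yLin n
    e := eVec n k r x t
    eb := ebVec n k r x t
    u := uVec n k r x t
    ψ := ψVec n k r x t
    ub := starRingEnd ℂ ∘ uVec n k r x t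
    ψb := starRingEnd ℂ ∘ ψVec n k r x t
    rel1 := rel1_aux k r hk x t
    rel2 := rel2_aux k r hk x t
    relb1 := fun w => by
      have h := congrArg (starRingEnd ℂ ∘ ·) (rel1_aux k r hk x t (starRingEnd ℂ ∘ w))
      simp only [conj_add_comp, conj_smul_comp, conj_jordan, conj_sMat, conj_conj,
        conj_comp_conj, conj_ebVec, map_mul, map_ofNat, conj_yLin] at h
      exact h
    relb2 := fun w => by
      have h := congrArg (starRingEnd ℂ ∘ ·) (rel2_aux k r hk x t (starRingEnd ℂ ∘ w))
      simp only [conj_jordan, conj_sMat, conj_comp_conj, conj_conj] at h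
      exact h
    inj := hinj
    injb := fun w hw => by
      have h := congrArg (starRingEnd ℂ ∘ ·) hw
      have h0 : (starRingEnd ℂ ∘ (0 : Idx1 N n → ℂ)) = 0 := by funext i; simp
      simp only [Matrix.mulVecLin_apply, conj_add_comp, conj_sMat, conj_tMat, h0] at h
      rw [← conj_comp_conj w, hinj _ h, h0]
    hu := hu
    hψ := hψ
    hub := by
      have h := congrArg (starRingEnd ℂ ∘ ·) hu
      simp only [conj_add_comp, conj_sMat, conj_tMat] at h
      exact h
    hψb := by
      have h := congrArg (starRingEnd ℂ ∘ ·) hψ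
      simp only [conj_add_comp, conj_sMat, conj_tMat, conj_jordan, conj_conj, conj_ebVec] at h
      exact h }

end Folding

/-! ### Evolution of the dressed vectors -/

section Evolution

variable {N : ℕ} {n : Fin N → ℕ} (k : Fin N → ℂ) (r : Fin N → ℕ → ℂ)

theorem map_conj_smul {ι : Type*} (c : ℂ) (A : Matrix ι ι ℂ) :
    (c • A).map (starRingEnd ℂ) = conj c • A.map (starRingEnd ℂ) := by
  ext i j; simp

theorem jordan_conj_conj :
    (jordan n fun j => conj (k j)).map (starRingEnd ℂ) = jordan n k := by
  rw [jordan_conj]; simp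

theorem tMat_x (ε : ℂ) (x t : ℝ) :
    MatDeriv (fun s => tMat n k r ε s t)
      ((-2 * I) • (jordan n k * (jordan n k * tMat n k r ε x t))) x := by
  have h : ((2 * I) • (jordan n (fun j => conj (k j)) * (jordan n (fun j => conj (k j))
        * sMat n k r ε x t))).map (starRingEnd ℂ)
      = (-2 * I) • (jordan n k * (jordan n k * tMat n k r ε x t)) := by
    simp only [map_conj_smul, Matrix.map_mul, jordan_conj_conj, tMat, map_mul, map_ofNat, conj_I]
    congr 1; ring
  rw [← h]
  exact fun a b => hasDerivAt_conj (sMat_x k r ε x t a b)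

theorem tMat_t (ε : ℂ) (x t : ℝ) :
    MatDeriv (fun s => tMat n k r ε x s)
      ((-4 * I) • (jordan n k * (jordan n k * (jordan n k * (jordan n k
        * tMat n k r ε x t))))) t := by
  have h : ((4 * I) • (jordan n (fun j => conj (k j)) * (jordan n (fun j => conj (k j))
        * (jordan n (fun j => conj (k j)) * (jordan n (fun j => conj (k j))
        * sMat n k r ε x t))))).map (starRingEnd ℂ)
      = (-4 * I) • (jordan n k * (jordan n k * (jordan n k * (jordan n k
        * tMat n k r ε x t)))) := by
    simp only [map_conj_smul, Matrix.map_mul, jordan_conj_conj, tMat, map_mul, map_ofNat, conj_I]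
    congr 1; ring
  rw [← h]
  exact fun a b => hasDerivAt_conj (sMat_t k r ε x t a b)

theorem ebVec_x (x t : ℝ) :
    VecDeriv (fun s => ebVec n k r s t)
      ((2 * I) • (jordan n (fun j => conj (k j)) *ᵥ (jordan n (fun j => conj (k j)) *ᵥ
        ebVec n k r x t))) x := by
  have h : starRingEnd ℂ ∘ ((-2 * I) • (jordan n k *ᵥ (jordan n k *ᵥ eVec n k r x t)))
      = (2 * I) • (jordan n (fun j => conj (k j)) *ᵥ (jordan n (fun j => conj (k j)) *ᵥ
        ebVec n k r x t)) := by
    simp only [conj_smul_comp, conj_jordan, ebVec, map_mul, map_neg, map_ofNat, conj_I]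
    congr 1; ring
  rw [← h]
  exact fun a => hasDerivAt_conj (eVec_x k r x t a)

theorem mMat_deriv {T S : ℝ → Matrix (Idx1 N n) (Idx1 N n) ℂ} {T' S'} {s : ℝ}
    (hT : MatDeriv T T' s) (hS : MatDeriv S S' s) :
    MatDeriv (fun s => 1 + T s * S s) (T' * S s + T s * S') s :=
  fun i j => (hT.mul hS i j).const_add _

theorem uVec_x (hk : ∀ j, 0 < (k j).re * (k j).im)
    (hM : ∀ x t, (mMat n k r x t).det ≠ 0) (x t : ℝ) :
    VecDeriv (fun s => uVec n k r s t)
      ((-2 * I) • (jordan n k *ᵥ (jordan n k *ᵥ uVec n k r x t))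
        - (4 * I * yLin n (uVec n k r x t)) • ψVec n k r x t) x := by
  refine VecDeriv.solve (mMat_deriv (tMat_x k r 1 x t) (sMat_x k r (-1) x t)) (eVec_x k r x t)
    (fun s => hM s t) (fun s => rfl) ?_
  have h := (dress k r hk (hM x t)).u_x
  simp only [Matrix.add_mulVec, Matrix.smul_mulVec, Matrix.mul_smul,
    ← Matrix.mulVec_mulVec, Matrix.one_mulVec]
  exact h

theorem ψVec_x (hk : ∀ j, 0 < (k j).re * (k j).im)
    (hM : ∀ x t, (mMat n k r x t).det ≠ 0) (x t : ℝ) :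
    VecDeriv (fun s => ψVec n k r s t)
      ((-4 * I * (dress k r hk (hM x t)).β) • uVec n k r x t) x := by
  have hb := (tMat_x (n := n) k r 1 x t).mulVec
    ((MatDeriv.const (jordan n fun j => conj (k j)) x).mulVec (ebVec_x k r x t))
  refine VecDeriv.solve (mMat_deriv (tMat_x k r 1 x t) (sMat_x k r (-1) x t)) hb
    (fun s => hM s t) (fun s => rfl) ?_
  have h := (dress k r hk (hM x t)).ψ_x
  simp only [Matrix.add_mulVec, Matrix.smul_mulVec, Matrix.mulVec_smul, Matrix.mul_smul,
    ← Matrix.mulVec_mulVec, Matrix.one_mulVec, Matrix.zero_mulVec, zero_add]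
  exact (map_smul (dress k r hk (hM x t)).M _ _).symm.trans h

theorem uVec_t (hk : ∀ j, 0 < (k j).re * (k j).im)
    (hM : ∀ x t, (mMat n k r x t).det ≠ 0) (x t : ℝ) :
    VecDeriv (fun s => uVec n k r x s)
      ((-4 * I) • (jordan n k *ᵥ (jordan n k *ᵥ (jordan n k *ᵥ (jordan n k *ᵥ uVec n k r x t))))
        - (8 * I * yLin n (uVec n k r x t)) • (jordan n k *ᵥ (jordan n k *ᵥ ψVec n k r x t))
        - (8 * I * (yLin n (jordan n k *ᵥ (jordan n k *ᵥ uVec n k r x t))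
            + 2 * yLin n (ψVec n k r x t) * yLin n (uVec n k r x t))) • ψVec n k r x t
        + (16 * I * yLin n (uVec n k r x t) * (dress k r hk (hM x t)).β) • uVec n k r x t) t := by
  refine VecDeriv.solve (mMat_deriv (tMat_t k r 1 x t) (sMat_t k r (-1) x t)) (eVec_t k r x t)
    (fun s => hM x s) (fun s => rfl) ?_
  have h := (dress k r hk (hM x t)).u_t
  simp only [Matrix.add_mulVec, Matrix.smul_mulVec, Matrix.mul_smul,
    ← Matrix.mulVec_mulVec, Matrix.one_mulVec]
  exact h

end Evolution

/-- The multiple-pole soliton with N distinct high-order poles solves the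
Gerdjikov–Ivanov equation. -/
theorem multiple_high_order_pole_soliton (N : ℕ) (hN : 1 ≤ N)
    (k : Fin N → ℂ) (hk : ∀ j, 0 < (k j).re * (k j).im) (hkinj : Function.Injective k)
    (n : Fin N → ℕ) (hn : ∀ j, 1 ≤ n j) (r : Fin N → ℕ → ℂ)
    (hdet : ∀ x t : ℝ, (AmatMP N n k r x t).det ≠ 0) :
    ∀ x t : ℝ,
      Complex.I * deriv (fun s => qSolMP N n k r x s) t
        + deriv (fun s => deriv (fun s' => qSolMP N n k r s' t) s) x
        - Complex.I * (qSolMP N n k r x t) ^ 2 * conj (deriv (fun s => qSolMP N n k r s t) x)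
        + (1 / 2) * (qSolMP N n k r x t) ^ 3 * (conj (qSolMP N n k r x t)) ^ 2 = 0 := by
  intro x t
  have hM : ∀ x t, (mMat n k r x t).det ≠ 0 := fun x t => mMat_det k r (hdet x t)
  have hq : ∀ x t, qSolMP N n k r x t = 4 * I * yLin n (uVec n k r x t) :=
    fun x t => qSol_eq k r (hdet x t)
  simp only [hq]
  have hqx : ∀ x t, HasDerivAt (fun s => 4 * I * yLin n (uVec n k r s t)) _ x := fun x t =>
    ((uVec_x k r hk hM x t).map (yLin n)).const_mul (4 * I)
  have hqt := ((uVec_t k r hk hM x t).map (yLin n)).const_mul (4 * I)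
  -- second `x`-derivative, from the closed form of the first one
  have hYu := (uVec_x k r hk hM x t).map (yLin n)
  have hYHu := (uVec_x k r hk hM x t).map
    (yLin n ∘ₗ (jordan n k).mulVecLin ∘ₗ (jordan n k).mulVecLin)
  have hYψ := (ψVec_x k r hk hM x t).map (yLin n)
  have hqxx := ((hYHu.const_mul (-2 * I)).sub ((hYu.const_mul (4 * I)).mul hYψ)).const_mul (4 * I)
  have hqx' : (fun s => deriv (fun s' => 4 * I * yLin n (uVec n k r s' t)) s) = fun s =>
      4 * I * (-2 * I * (yLin n ∘ₗ (jordan n k).mulVecLin ∘ₗ (jordan n k).mulVecLin)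
        (uVec n k r s t) - 4 * I * yLin n (uVec n k r s t) * yLin n (ψVec n k r s t)) := by
    funext s
    rw [(hqx s t).deriv, map_sub, map_smul, map_smul]
    rfl
  have hmiura := (dress k r hk (hM x t)).miura
  have e2 : (starRingEnd ℂ) (yLin n (jordan n k *ᵥ (jordan n k *ᵥ uVec n k r x t)))
      = yLin n (jordan n (fun j => conj (k j)) *ᵥ (jordan n (fun j => conj (k j)) *ᵥ
        (starRingEnd ℂ ∘ uVec n k r x t))) := by
    rw [conj_yLin, conj_jordan, conj_jordan]
  have hmiura' : (dress k r hk (hM x t)).β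
      = conj (yLin n (jordan n k *ᵥ (jordan n k *ᵥ uVec n k r x t)))
        + 2 * conj (yLin n (uVec n k r x t)) * conj (yLin n (ψVec n k r x t))
        + 4 * yLin n (uVec n k r x t) * conj (yLin n (uVec n k r x t)) ^ 2 := by
    rw [e2, conj_yLin, conj_yLin]; exact hmiura
  rw [hqt.deriv, hqx', (hqx x t).deriv]
  -- `hqxx` differentiates a syntactically different but definitionally equal function
  erw [hqxx.deriv]
  simp only [LinearMap.comp_apply, Matrix.mulVecLin_apply, map_add, map_sub, map_smul,
    smul_eq_mul, map_mul, map_neg,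
    map_ofNat, conj_I]
  rw [hmiura']
  -- what remains is a polynomial identity in these scalars, their conjugates and `I`
  generalize yLin n (jordan n k *ᵥ (jordan n k *ᵥ (jordan n k *ᵥ (jordan n k *ᵥ
    uVec n k r x t)))) = z4
  generalize yLin n (jordan n k *ᵥ (jordan n k *ᵥ uVec n k r x t)) = z2
  generalize yLin n (jordan n k *ᵥ (jordan n k *ᵥ ψVec n k r x t)) = p2
  generalize yLin n (uVec n k r x t) = z0
  generalize yLin n (ψVec n k r x t) = p0
  have i3 : I ^ 3 = -I := by rw [pow_succ, I_sq]; ring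
  have i5 : I ^ 5 = I := by rw [pow_succ, I_pow_four]; ring
  ring_nf
  simp only [i3, i5]
  ring
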